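/- Let k = 3 + 2l + 1/2 if l ≥ −3/4 and k = 2 if −1 < l < −3/4. Suppose there exists η̌ > 0 such that σ'(η) ≥ 1/(2(3+2l)) + k·σ(η) for all 0 < η ≤ η̌. Then every regular solution of the static Einstein–Vlasov equations whose central value η_c satisfies η_c < η̌ has finite radius and finite mass: its maximal interval of definition is (0,R) with R < ∞ and sup_{0<r<R} m(r) < ∞. -/

import Mathlib

open Filter Set MeasureTheory

/-- The kinetic integrals `g_i(η) = ∫_{e^{-η}}^1 φ(ℰ) [(ℰ² - e^{-2η})/2]^i dℰ`. -/
noncomputable def gfun (φ : ℝ → ℝ) (i η : ℝ) : ℝ :=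
  ∫ E in Real.exp (-η)..1, φ E * (((E ^ 2 - Real.exp (-2 * η)) / 2) ^ i)

/-- The constant `a = 2^{l+3/2} π^{3/2} Γ(l+1) / ((l+3/2) Γ(l+3/2))`. -/
noncomputable def acoef (l : ℝ) : ℝ :=
  (2 : ℝ) ^ (l + 3 / 2) * Real.pi ^ ((3 : ℝ) / 2) * Real.Gamma (l + 1) /
    ((l + 3 / 2) * Real.Gamma (l + 3 / 2))

/-- The radial pressure `p_rad(r,η) = a r^{2l} e^{(2l+4)η} g_{l+3/2}(η)`. -/
noncomputable def pRad (φ : ℝ → ℝ) (l r η : ℝ) : ℝ :=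
  acoef l * r ^ (2 * l) * Real.exp ((2 * l + 4) * η) * gfun φ (l + 3 / 2) η

/-- The energy density `ρ(r,η)`. -/
noncomputable def rhoFun (φ : ℝ → ℝ) (l r η : ℝ) : ℝ :=
  (l + 3 / 2) * acoef l * r ^ (2 * l) * Real.exp ((2 * l + 4) * η) *
    (2 * gfun φ (l + 3 / 2) η + Real.exp (-2 * η) * gfun φ (l + 1 / 2) η)

/-- `σ(η) = p_rad/ρ`. -/
noncomputable def sigmaFun (φ : ℝ → ℝ) (l η : ℝ) : ℝ :=
  (1 / (3 + 2 * l)) * gfun φ (l + 3 / 2) η /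
    (gfun φ (l + 3 / 2) η + (1 / 2) * Real.exp (-2 * η) * gfun φ (l + 1 / 2) η)

/-- A solution of the static Einstein–Vlasov equations on `{r | r₁ < r < R}`. -/
def IsEVSolution (φ : ℝ → ℝ) (l : ℝ) (m ηf : ℝ → ℝ) (r₁ : ℝ) (R : EReal) : Prop :=
  ∀ r : ℝ, r₁ < r → (r : EReal) < R →
    0 < ηf r ∧ 0 < m r ∧ 2 * m r < r ∧
    HasDerivAt m (4 * Real.pi * r ^ 2 * rhoFun φ l r (ηf r)) r ∧
    HasDerivAt ηf
      (-((1 - 2 * m r / r)⁻¹ * (m r / r + 4 * Real.pi * r ^ 2 * pRad φ l r (ηf r))) / r) r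


/-- `φ` is integrable up to `1`. -/
lemma aux_phi_int (φ : ℝ → ℝ) (hφcont : ContinuousOn φ (Ioo 0 1))
    (hφnonneg : ∀ x ∈ Ioo (0:ℝ) 1, 0 ≤ φ x)
    (hφbound : ∃ C > (0:ℝ), ∃ ε > (0:ℝ), ∃ δ ∈ Ioo (0:ℝ) 1,
      ∀ x ∈ Ioo (1 - δ) 1, φ x ≤ C * (1 - x) ^ (-1 + ε))
    (b : ℝ) (hb : 0 < b) (hb1 : b < 1) : IntegrableOn φ (Ioo b 1) := by
  obtain ⟨C, hC, ε, hε, δ, hδ, h⟩ := hφbound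
  set c := max b (1 - δ / 2) with hc
  have hc1 : c < 1 := max_lt hb1 (by linarith [hδ.1])
  have hbc : b ≤ c := le_max_left _ _
  have hδc : 1 - δ < c := lt_of_lt_of_le (by linarith [hδ.1]) (le_max_right _ _)
  have h1 : IntegrableOn φ (Icc b c) := by
    apply ContinuousOn.integrableOn_Icc
    exact hφcont.mono (fun x hx => ⟨by linarith [hx.1], by linarith [hx.2]⟩)
  have h2 : IntegrableOn φ (Ioo c 1) := by
    have hint : IntervalIntegrable (fun x : ℝ => C * (1 - x) ^ (-1 + ε)) volume c 1 := by
      have := (intervalIntegral.intervalIntegrable_rpow' (a := 1 - c) (b := 0)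
        (r := -1 + ε) (by linarith)).comp_sub_left 1
      simpa using this.const_mul C
    rw [intervalIntegrable_iff_integrableOn_Ioo_of_le hc1.le] at hint
    refine Integrable.mono' hint ?_ ?_
    · exact (hφcont.mono (fun x hx => ⟨by linarith [hx.1], hx.2⟩)).aestronglyMeasurable
        measurableSet_Ioo
    · filter_upwards [ae_restrict_mem measurableSet_Ioo] with x hx
      rw [Real.norm_of_nonneg (hφnonneg x ⟨by linarith [hx.1], hx.2⟩)]
      exact h x ⟨by linarith [hx.1], hx.2⟩
  exact (h1.union h2).mono_set (fun x hx => by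
    rcases le_or_gt x c with h | h
    · exact Or.inl ⟨hx.1.le, h⟩
    · exact Or.inr ⟨h, hx.2⟩)

/-- inner integral in `θ`. -/
lemma aux_inner (i : ℝ) (hi : 0 < i) (η E : ℝ) (hE : Real.exp (-η) < E) :
    IntegrableOn (fun θ => i * Real.exp (-2 * θ) *
      ((E ^ 2 - Real.exp (-2 * θ)) / 2) ^ (i - 1)) (Ioc (-Real.log E) η) ∧
    ∫ θ in Ioc (-Real.log E) η, i * Real.exp (-2 * θ) *
      ((E ^ 2 - Real.exp (-2 * θ)) / 2) ^ (i - 1) =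
      ((E ^ 2 - Real.exp (-2 * η)) / 2) ^ i := by
  have hE0 : 0 < E := (Real.exp_pos _).trans hE
  have hle : -Real.log E ≤ η := by
    have := (Real.lt_log_iff_exp_lt hE0).2 hE
    linarith
  have hE2 : Real.exp (-2 * -Real.log E) = E ^ 2 := by
    rw [show -2 * -Real.log E = Real.log E + Real.log E by ring, Real.exp_add, Real.exp_log hE0]
    ring
  have hcont : ContinuousOn (fun θ => ((E ^ 2 - Real.exp (-2 * θ)) / 2) ^ i)
      (Icc (-Real.log E) η) := by
    apply ContinuousOn.rpow_const (by fun_prop)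
    exact fun _ _ => Or.inr hi.le
  have hpos : ∀ θ ∈ Ioo (-Real.log E) η, 0 < (E ^ 2 - Real.exp (-2 * θ)) / 2 := by
    intro θ hθ
    have : Real.exp (-2 * θ) < Real.exp (-2 * -Real.log E) :=
      Real.exp_lt_exp.2 (by linarith [hθ.1])
    rw [hE2] at this
    linarith
  have hder : ∀ θ ∈ Ioo (-Real.log E) η,
      HasDerivAt (fun θ => ((E ^ 2 - Real.exp (-2 * θ)) / 2) ^ i)
        (i * Real.exp (-2 * θ) * ((E ^ 2 - Real.exp (-2 * θ)) / 2) ^ (i - 1)) θ := by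
    intro θ hθ
    have h1 : HasDerivAt (fun θ => (E ^ 2 - Real.exp (-2 * θ)) / 2) (Real.exp (-2 * θ)) θ := by
      have := ((((hasDerivAt_id θ).const_mul (-2)).exp).const_sub (E ^ 2)).div_const 2
      refine this.congr_deriv ?_
      simp
    refine (h1.rpow_const (p := i) (Or.inl (hpos θ hθ).ne')).congr_deriv ?_
    ring
  have hint := intervalIntegral.integrableOn_deriv_of_nonneg hcont hder (fun θ hθ =>
    mul_nonneg (by positivity) (Real.rpow_nonneg (hpos θ hθ).le _))
  refine ⟨hint, ?_⟩
  rw [← intervalIntegral.integral_of_le hle,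
    intervalIntegral.integral_eq_sub_of_hasDerivAt_of_le hle hcont hder
      ((intervalIntegrable_iff_integrableOn_Ioc_of_le hle).2 hint), hE2]
  simp [Real.zero_rpow hi.ne']

/-- Integral representation `g_i(η) = ∫_0^η i e^{-2θ} g_{i-1}(θ) dθ`. -/
lemma aux_gfun_int (φ : ℝ → ℝ) (hφcont : ContinuousOn φ (Ioo 0 1))
    (hφnonneg : ∀ x ∈ Ioo (0:ℝ) 1, 0 ≤ φ x)
    (hφint : ∀ b : ℝ, 0 < b → b < 1 → IntegrableOn φ (Ioo b 1))
    (i : ℝ) (hi : 0 < i) (η : ℝ) (hη : 0 < η) :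
    IntervalIntegrable (fun θ => i * Real.exp (-2 * θ) * gfun φ (i - 1) θ) volume 0 η ∧
    gfun φ i η = ∫ θ in (0:ℝ)..η, i * Real.exp (-2 * θ) * gfun φ (i - 1) θ := by
  set b := Real.exp (-η) with hb
  have hb0 : 0 < b := Real.exp_pos _
  have hb1 : b < 1 := by rw [hb, Real.exp_lt_one_iff]; linarith
  set μ := (volume : Measure ℝ).restrict (Ioo b 1) with hμ
  set ν := (volume : Measure ℝ).restrict (Ioo 0 η) with hν
  set K : ℝ → ℝ → ℝ := fun E θ => i * Real.exp (-2 * θ) *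
      ((E ^ 2 - Real.exp (-2 * θ)) / 2) ^ (i - 1) with hK
  set F : ℝ → ℝ → ℝ := fun E θ =>
    φ E * ({p : ℝ × ℝ | Real.exp (-p.2) < p.1}.indicator (fun p => K p.1 p.2) (E, θ)) with hF
  have hFsec : ∀ E ∈ Ioo b 1, ∀ θ, F E θ = φ E * (Ioi (-Real.log E)).indicator (K E) θ := by
    intro E hE θ
    have hE0 : 0 < E := hb0.trans hE.1
    have : Real.exp (-θ) < E ↔ -Real.log E < θ := by
      rw [← Real.lt_log_iff_exp_lt hE0]; constructor <;> intro h <;> linarith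
    simp only [hF, indicator, mem_ofPred_eq, mem_Ioi, this]
  have hinn : ∀ E ∈ Ioo b 1, Integrable (F E) ν ∧
      ∫ θ, F E θ ∂ν = φ E * ((E ^ 2 - Real.exp (-2 * η)) / 2) ^ i := by
    intro E hE
    have hE0 : 0 < E := hb0.trans hE.1
    obtain ⟨h1, h2⟩ := aux_inner i hi η E hE.1
    have hFE : F E = fun θ => φ E * (Ioi (-Real.log E)).indicator (K E) θ :=
      funext (hFsec E hE)
    have hlog : 0 < -Real.log E := by linarith [Real.log_neg hE0 hE.2]
    have hset : Ioi (-Real.log E) ∩ Ioo 0 η = Ioo (-Real.log E) η := by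
      ext x; simp only [mem_inter_iff, mem_Ioi, mem_Ioo]
      constructor
      · rintro ⟨h, h', h''⟩; exact ⟨h, h''⟩
      · rintro ⟨h, h'⟩; exact ⟨h, by linarith, h'⟩
    rw [hFE]
    constructor
    · apply Integrable.const_mul
      rw [integrable_indicator_iff measurableSet_Ioi, hν, IntegrableOn,
        Measure.restrict_restrict measurableSet_Ioi, hset]
      exact h1.mono_set Ioo_subset_Ioc_self
    · rw [integral_const_mul, integral_indicator measurableSet_Ioi, hν,
        Measure.restrict_restrict measurableSet_Ioi, hset, ← integral_Ioc_eq_integral_Ioo, h2]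
  have hFnn : ∀ E ∈ Ioo b 1, ∀ θ, 0 ≤ F E θ := by
    intro E hE θ
    apply mul_nonneg (hφnonneg E ⟨hb0.trans hE.1, hE.2⟩)
    apply indicator_nonneg
    rintro ⟨E', θ'⟩ h
    have h : Real.exp (-θ') < E' := h
    apply mul_nonneg (by positivity)
    apply Real.rpow_nonneg
    have : Real.exp (-2 * θ') = Real.exp (-θ') ^ 2 := by
      rw [← Real.exp_nat_mul]; congr 1; push_cast; ring
    rw [this]
    have := pow_le_pow_left₀ (Real.exp_pos (-θ')).le h.le 2
    linarith
  have hmeas : AEStronglyMeasurable (Function.uncurry F) (μ.prod ν) := by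
    have h1 : AEStronglyMeasurable φ μ :=
      (hφcont.mono (fun x hx => ⟨hb0.trans hx.1, hx.2⟩)).aestronglyMeasurable measurableSet_Ioo
    have h2 : AEStronglyMeasurable (fun p : ℝ × ℝ => φ p.1) (μ.prod ν) := h1.comp_fst
    refine h2.mul (Measurable.aestronglyMeasurable ?_)
    refine Measurable.indicator ?_ (measurableSet_lt (by fun_prop) (by fun_prop))
    simp only [hK]
    fun_prop
  have hout : Integrable (fun E => φ E * ((E ^ 2 - Real.exp (-2 * η)) / 2) ^ i) μ := by
    refine Integrable.mono' (hφint b hb0 hb1) ?_ ?_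
    · exact (hφint b hb0 hb1).aestronglyMeasurable.mul
        (Measurable.aestronglyMeasurable (by fun_prop))
    · filter_upwards [ae_restrict_mem measurableSet_Ioo] with E hE
      have hE0 : 0 < E := hb0.trans hE.1
      have hp := hφnonneg E ⟨hE0, hE.2⟩
      have e2 : Real.exp (-2 * η) = b ^ 2 := by
        rw [hb, ← Real.exp_nat_mul]; congr 1; push_cast; ring
      have h0 : 0 ≤ (E ^ 2 - Real.exp (-2 * η)) / 2 := by
        rw [e2]; nlinarith [hE.1]
      have h1 : (E ^ 2 - Real.exp (-2 * η)) / 2 ≤ 1 := by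
        have := Real.exp_pos (-2 * η)
        nlinarith [hE.2]
      rw [Real.norm_of_nonneg (mul_nonneg hp (Real.rpow_nonneg h0 _))]
      exact mul_le_of_le_one_right hp (Real.rpow_le_one h0 h1 hi.le)
  have hFint : Integrable (Function.uncurry F) (μ.prod ν) := by
    rw [integrable_prod_iff hmeas]
    constructor
    · filter_upwards [ae_restrict_mem measurableSet_Ioo] with E hE
      exact (hinn E hE).1
    · refine hout.congr ?_
      filter_upwards [ae_restrict_mem measurableSet_Ioo] with E hE
      rw [← (hinn E hE).2]
      refine integral_congr_ae (Eventually.of_forall fun θ => ?_)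
      exact (Real.norm_of_nonneg (hFnn E hE θ)).symm
  have hsec2 : ∀ θ ∈ Ioo 0 η, ∫ E, F E θ ∂μ = i * Real.exp (-2 * θ) * gfun φ (i - 1) θ := by
    intro θ hθ
    have hθ1 : Real.exp (-θ) < 1 := by rw [Real.exp_lt_one_iff]; linarith [hθ.1]
    have hbθ : b < Real.exp (-θ) := by rw [hb]; exact Real.exp_lt_exp.2 (by linarith [hθ.2])
    have e : (fun E => F E θ) = (Ioi (Real.exp (-θ))).indicator (fun E => i * Real.exp (-2 * θ) *
        (φ E * ((E ^ 2 - Real.exp (-2 * θ)) / 2) ^ (i - 1))) := by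
      funext E
      simp only [hF, hK, indicator, mem_ofPred_eq, mem_Ioi]
      split_ifs
      · ring
      · simp
    have hset : Ioi (Real.exp (-θ)) ∩ Ioo b 1 = Ioo (Real.exp (-θ)) 1 := by
      ext x; simp only [mem_inter_iff, mem_Ioi, mem_Ioo]
      constructor
      · rintro ⟨h, h', h''⟩; exact ⟨h, h''⟩
      · rintro ⟨h, h'⟩; exact ⟨h, by linarith, h'⟩
    rw [e, integral_indicator measurableSet_Ioi, hμ, Measure.restrict_restrict measurableSet_Ioi,
      hset, integral_const_mul, gfun, intervalIntegral.integral_of_le hθ1.le,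
      integral_Ioc_eq_integral_Ioo]
  have hae : (fun θ => ∫ E, F E θ ∂μ) =ᵐ[ν] fun θ => i * Real.exp (-2 * θ) * gfun φ (i - 1) θ := by
    filter_upwards [ae_restrict_mem measurableSet_Ioo] with θ hθ using hsec2 θ hθ
  constructor
  · rw [intervalIntegrable_iff_integrableOn_Ioo_of_le hη.le]
    exact hFint.integral_prod_right.congr hae
  · rw [intervalIntegral.integral_of_le hη.le, integral_Ioc_eq_integral_Ioo, ← hν,
      ← integral_congr_ae hae, ← integral_integral_swap hFint, gfun,
      intervalIntegral.integral_of_le hb1.le, integral_Ioc_eq_integral_Ioo, ← hμ]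
    apply integral_congr_ae
    filter_upwards [ae_restrict_mem measurableSet_Ioo] with E hE
    exact (hinn E hE).2.symm

lemma aux_gfun_nonneg (φ : ℝ → ℝ)
    (hφnonneg : ∀ x ∈ Ioo (0:ℝ) 1, 0 ≤ φ x) (i η : ℝ) (hη : 0 < η) : 0 ≤ gfun φ i η := by
  have hb1 : Real.exp (-η) < 1 := by rw [Real.exp_lt_one_iff]; linarith
  rw [gfun, intervalIntegral.integral_of_le hb1.le, integral_Ioc_eq_integral_Ioo]
  apply setIntegral_nonneg measurableSet_Ioo
  intro E hE
  have hE0 : 0 < E := (Real.exp_pos _).trans hE.1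
  apply mul_nonneg (hφnonneg E ⟨hE0, hE.2⟩)
  apply Real.rpow_nonneg
  have e2 : Real.exp (-2 * η) = Real.exp (-η) ^ 2 := by
    rw [← Real.exp_nat_mul]; congr 1; push_cast; ring
  rw [e2]
  nlinarith [hE.1, Real.exp_pos (-η)]

/-- Positivity of σ and derivative of `g_{l+3/2}`. -/
lemma aux_sigma (l : ℝ) (hl : -1 < l) (φ : ℝ → ℝ) (hφcont : ContinuousOn φ (Ioo 0 1))
    (hφnonneg : ∀ x ∈ Ioo (0:ℝ) 1, 0 ≤ φ x)
    (hφint : ∀ b : ℝ, 0 < b → b < 1 → IntegrableOn φ (Ioo b 1)) (ηch : ℝ)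
    (hd : ∀ η, 0 < η → η ≤ ηch → 0 < deriv (sigmaFun φ l) η) (η : ℝ) (h0 : 0 < η) (h1 : η < ηch) :
    0 < sigmaFun φ l η ∧ sigmaFun φ l η ≤ 1 / (3 + 2 * l) ∧ 0 < gfun φ (l + 3 / 2) η ∧
    DifferentiableAt ℝ (sigmaFun φ l) η ∧
    HasDerivAt (gfun φ (l + 3 / 2))
      ((l + 3 / 2) * Real.exp (-2 * η) * gfun φ (l + 1 / 2) η) η := by
  have hN : 0 < 3 + 2 * l := by linarith
  have hdiff : ∀ η, 0 < η → η ≤ ηch → DifferentiableAt ℝ (sigmaFun φ l) η :=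
    fun η h h' => differentiableAt_of_deriv_ne_zero (hd η h h').ne'
  have hnn : ∀ η, 0 < η → 0 ≤ sigmaFun φ l η := by
    intro η h
    have a := aux_gfun_nonneg φ hφnonneg (l + 3 / 2) η h
    have b := aux_gfun_nonneg φ hφnonneg (l + 1 / 2) η h
    rw [sigmaFun]
    positivity
  have hmono : StrictMonoOn (sigmaFun φ l) (Ioc 0 ηch) := by
    apply strictMonoOn_of_deriv_pos (convex_Ioc 0 ηch)
    · exact fun x hx => (hdiff x hx.1 hx.2).continuousAt.continuousWithinAt
    · intro x hx
      rw [interior_Ioc] at hx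
      exact hd x hx.1 hx.2.le
  have hσpos : ∀ η, 0 < η → η ≤ ηch → 0 < sigmaFun φ l η := by
    intro η h h'
    have := hmono (show η / 2 ∈ Ioc 0 ηch from ⟨by linarith, by linarith⟩)
      (show η ∈ Ioc 0 ηch from ⟨h, h'⟩) (by linarith)
    linarith [hnn (η / 2) (by linarith)]
  have hgpos : ∀ η, 0 < η → η ≤ ηch → 0 < gfun φ (l + 3 / 2) η := by
    intro η h h'
    refine lt_of_le_of_ne (aux_gfun_nonneg φ hφnonneg _ η h) (fun h2 => ?_)
    have := hσpos η h h'
    rw [sigmaFun, ← h2] at this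
    simp at this
  have hrep := aux_gfun_int φ hφcont hφnonneg hφint (l + 3 / 2) (by linarith)
  have e1 : l + 3 / 2 - 1 = l + 1 / 2 := by ring
  simp only [e1] at hrep
  set h : ℝ → ℝ := fun θ => (l + 3 / 2) * Real.exp (-2 * θ) * gfun φ (l + 1 / 2) θ with hh
  have hgc : ContinuousOn (gfun φ (l + 3 / 2)) (Ioo 0 ηch) := by
    have hch : 0 < ηch := h0.trans h1
    have := intervalIntegral.continuousOn_primitive_interval' (hrep ηch hch).1
      (left_mem_uIcc)
    rw [uIcc_of_le hch.le] at this
    exact (this.mono Ioo_subset_Icc_self).congr (fun x hx => (hrep x hx.1).2)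
  have hheq : ∀ θ ∈ Ioo 0 ηch, h θ = gfun φ (l + 3 / 2) θ / sigmaFun φ l θ
      - (3 + 2 * l) * gfun φ (l + 3 / 2) θ := by
    intro θ hθ
    have a := hgpos θ hθ.1 hθ.2.le
    have b := aux_gfun_nonneg φ hφnonneg (l + 1 / 2) θ hθ.1
    have c : 0 < gfun φ (l + 3 / 2) θ + 1 / 2 * Real.exp (-2 * θ) * gfun φ (l + 1 / 2) θ := by
      positivity
    simp only [hh]
    rw [sigmaFun]
    clear_value h
    generalize gfun φ (l + 3 / 2) θ = g1 at *
    generalize gfun φ (l + 1 / 2) θ = g0 at *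
    generalize Real.exp (-2 * θ) = ex at *
    have c' : g1 + 1 / 2 * ex * g0 ≠ 0 := c.ne'
    have e2 : g1 / (1 / (3 + 2 * l) * g1 / (g1 + 1 / 2 * ex * g0)) =
        (3 + 2 * l) * (g1 + 1 / 2 * ex * g0) := by
      rw [div_div_eq_mul_div, div_eq_iff (by positivity)]
      field_simp
    rw [e2]
    ring
  have hhc : ContinuousOn h (Ioo 0 ηch) := by
    refine ContinuousOn.congr ?_ hheq
    refine (hgc.div (fun x hx => (hdiff x hx.1 hx.2.le).continuousAt.continuousWithinAt)
      (fun x hx => (hσpos x hx.1 hx.2.le).ne')).sub (continuousOn_const.mul hgc)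
  refine ⟨hσpos η h0 h1.le, ?_, hgpos η h0 h1.le, hdiff η h0 h1.le, ?_⟩
  · have a := hgpos η h0 h1.le
    have b := aux_gfun_nonneg φ hφnonneg (l + 1 / 2) η h0
    have c : 0 ≤ 1 / 2 * Real.exp (-2 * η) * gfun φ (l + 1 / 2) η := by positivity
    rw [sigmaFun, mul_div_assoc]
    apply mul_le_of_le_one_right (by positivity)
    rw [div_le_one (by positivity)]
    linarith
  · have := intervalIntegral.integral_hasDerivAt_right (hrep η h0).1
      (hhc.stronglyMeasurableAtFilter isOpen_Ioo η ⟨h0, h1⟩)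
      (hhc.continuousAt (Ioo_mem_nhds h0 h1))
    refine this.congr_of_eventuallyEq ?_
    filter_upwards [lt_mem_nhds h0] with x hx using (hrep x hx).2

/-- Barrier lemma. -/
lemma aux_barrier (f f' : ℝ → ℝ) (a b c : ℝ) (hab : a ≤ b)
    (hf : ∀ x ∈ Icc a b, HasDerivAt f (f' x) x) (ha : c ≤ f a)
    (hc : ∀ x ∈ Icc a b, f x = c → 0 < f' x) : c ≤ f b := by
  refine image_le_of_deriv_right_lt_deriv_boundary' (f := fun _ => c) (f' := fun _ => 0) (a := a)
    (b := b) (B := f) (B' := f') continuousOn_const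
    (fun x _ => hasDerivWithinAt_const _ _ _) ha
    (fun x hx => (hf x hx).continuousAt.continuousWithinAt)
    (fun x hx => (hf x (Ico_subset_Icc_self hx)).hasDerivWithinAt)
    (fun x hx h => hc x (Ico_subset_Icc_self hx) h.symm) ⟨hab, le_rfl⟩

set_option maxHeartbeats 1000000 in
/-- Analytic core: the dynamical system has no global orbit. -/
lemma aux_ode (N k : ℝ) (hN : 1 < N) (hk2 : 2 ≤ k) (hkN : N + 1 / 2 ≤ k)
    (u v σ s : ℝ → ℝ)
    (hu : ∀ r > 0, 0 < u r) (hv : ∀ r > 0, 0 < v r) (hσ : ∀ r > 0, 0 < σ r)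
    (hσ1 : ∀ r > 0, σ r ≤ 1)
    (hs : ∀ r > 0, 1 / (2 * N) + k * σ r ≤ s r)
    (hdu : ∀ r > 0, HasDerivAt u
      (u r * (N - u r - (1 + σ r - s r) * v r * (1 + σ r * u r)) / r) r)
    (hdv : ∀ r > 0, HasDerivAt v
      (v r * ((u r - 1) * (1 + 2 * σ r * v r) + s r * v r * (1 + σ r * u r)) / r) r)
    (hul : Tendsto u (nhdsWithin 0 (Ioi 0)) (nhds N))
    (hvl : Tendsto v (nhdsWithin 0 (Ioi 0)) (nhds 0)) : False := by
  have hN0 : 0 < N := by linarith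
  set Φ : ℝ → ℝ := fun r => u r + v r / 2 - N with hΦ
  set D : ℝ → ℝ := fun r => u r * (N - u r - (1 + σ r - s r) * v r * (1 + σ r * u r)) +
    v r * ((u r - 1) * (1 + 2 * σ r * v r) + s r * v r * (1 + σ r * u r)) / 2 with hD
  have hdΦ : ∀ r > 0, HasDerivAt Φ (D r / r) r := by
    intro r hr
    have := ((hdu r hr).add ((hdv r hr).div_const 2)).sub_const N
    refine this.congr_deriv ?_
    simp only [hD]
    field_simp
  -- key lower bound
  have hDlow : ∀ r > 0, u r < N →
      Φ r * (-u r + (1 / (2 * N) + k * σ r) * v r * (1 + σ r * u r) +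
        2 * σ r * v r * (u r - 1)) < D r := by
    intro r hr huN
    have h1 := hu r hr
    have h2 := hv r hr
    have h3 := hσ r hr
    have h4 := hs r hr
    have e : D r = Φ r * (-u r + (1 / (2 * N) + k * σ r) * v r * (1 + σ r * u r) +
        2 * σ r * v r * (u r - 1)) +
        σ r * v r * ((N - u r) * (k - 2) + u r * (k - N - 1 / 2) + 3 * u r * (N - u r)
          + σ r * u r * (k * N - u r)) +
        v r * (1 + σ r * u r) * (s r - (1 / (2 * N) + k * σ r)) * (u r + v r / 2) := by
      simp only [hD, hΦ]
      field_simp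
      ring
    have p1 : 0 ≤ (N - u r) * (k - 2) := mul_nonneg (by linarith) (by linarith)
    have p2 : 0 ≤ u r * (k - N - 1 / 2) := mul_nonneg h1.le (by linarith)
    have p3 : 0 < 3 * u r * (N - u r) := mul_pos (by linarith) (by linarith)
    have p4 : 0 ≤ σ r * u r * (k * N - u r) := by
      apply mul_nonneg (by positivity)
      nlinarith
    have p5 : 0 < σ r * v r * ((N - u r) * (k - 2) + u r * (k - N - 1 / 2) + 3 * u r * (N - u r)
          + σ r * u r * (k * N - u r)) := by
      apply mul_pos (by positivity)
      linarith
    have p6 : 0 ≤ v r * (1 + σ r * u r) * (s r - (1 / (2 * N) + k * σ r)) * (u r + v r / 2) := by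
      apply mul_nonneg (mul_nonneg (by positivity) (by linarith)) (by positivity)
    linarith
  have hΦl : Tendsto Φ (nhdsWithin 0 (Ioi 0)) (nhds 0) := by
    have := (hul.add (hvl.div_const 2)).sub_const N
    simpa [hΦ] using this
  -- near the center
  obtain ⟨T, hT, hTB⟩ : ∃ T > 0, ∀ r, 0 < r → r < T → 1 < u r ∧ v r * (3 + 2 * k) < 1 := by
    have e1 := hul.eventually (lt_mem_nhds hN)
    have e2 : ∀ᶠ r in nhdsWithin (0:ℝ) (Ioi 0), v r * (3 + 2 * k) < 1 := by
      have := hvl.mul_const (3 + 2 * k)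
      rw [zero_mul] at this
      exact this.eventually (gt_mem_nhds one_pos)
    obtain ⟨T, hT, h⟩ := mem_nhdsGT_iff_exists_Ioo_subset.1 (e1.and e2)
    exact ⟨T, hT, fun r h0 h1 => h ⟨h0, h1⟩⟩
  have hstart : ∀ r, 0 < r → r < T → 0 ≤ Φ r := by
    intro r hr hrT
    by_contra hneg
    push Not at hneg
    have e1 := hΦl.eventually (lt_mem_nhds (show Φ r / 2 < 0 by linarith))
    obtain ⟨T', hT', h⟩ := mem_nhdsGT_iff_exists_Ioo_subset.1 e1
    have hT'' : 0 < T' := hT'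
    have hmin : 0 < min T' r := lt_min hT'' hr
    have hlt1 : min T' r / 2 < T' := by linarith [min_le_left T' r]
    have hlt2 : min T' r / 2 ≤ r := by linarith [min_le_right T' r]
    have hst : Φ r / 2 < Φ (min T' r / 2) := h ⟨by positivity, hlt1⟩
    have := aux_barrier Φ (fun x => D x / x) (min T' r / 2) r (Φ r / 2) hlt2
      (fun x hx => hdΦ x (by linarith [hx.1])) hst.le ?_
    · linarith
    · intro x hx hxe
      have hx0 : 0 < x := by linarith [hx.1]
      obtain ⟨q1, q2⟩ := hTB x hx0 (by linarith [hx.2])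
      have h2 := hv x hx0
      have h3 := hσ x hx0
      have h3' := hσ1 x hx0
      have huN : u x < N := by
        have : u x + v x / 2 - N = Φ r / 2 := hxe
        linarith
      have hB : -u x + (1 / (2 * N) + k * σ x) * v x * (1 + σ x * u x) +
        2 * σ x * v x * (u x - 1) ≤ 0 := by
        have a1 : 1 / (2 * N) ≤ 1 / 2 := by
          rw [div_le_div_iff₀ (by positivity) (by norm_num)]; linarith
        have a2 : k * σ x ≤ k := by nlinarith
        have a3 : 1 + σ x * u x ≤ 2 * u x := by nlinarith
        have a4 : (1 / (2 * N) + k * σ x) * v x * (1 + σ x * u x) ≤ (1 / 2 + k) * v x * (2 * u x) := by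
          gcongr
        have a5 : 2 * σ x * v x * (u x - 1) ≤ 2 * 1 * v x * u x := by
          gcongr
          linarith
        have a6 : (v x * (3 + 2 * k)) * u x ≤ 1 * u x := by gcongr
        nlinarith
      have := hDlow x hx0 huN
      apply div_pos _ hx0
      have : 0 ≤ Φ x * (-u x + (1 / (2 * N) + k * σ x) * v x * (1 + σ x * u x) +
        2 * σ x * v x * (u x - 1)) := mul_nonneg_of_nonpos_of_nonpos (by linarith) hB
      linarith
  have hzero : ∀ r > 0, Φ r = 0 → 0 < D r / r := by
    intro r hr h0
    have huN : u r < N := by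
      have : u r + v r / 2 - N = 0 := h0
      linarith [hv r hr]
    have := hDlow r hr huN
    rw [h0, zero_mul] at this
    exact div_pos this hr
  have hΦ0 : ∀ r > 0, 0 ≤ Φ r := by
    intro r hr
    rcases lt_or_ge r T with h | h
    · exact hstart r hr h
    · exact aux_barrier Φ (fun x => D x / x) (T / 2) r 0 (by linarith)
        (fun x hx => hdΦ x (by linarith [hx.1])) (hstart _ (by linarith) (by linarith))
        (fun x hx h => hzero x (by linarith [hx.1]) h)
  have hΦpos : ∀ r > 0, 0 < Φ r := by
    intro r hr
    rcases (hΦ0 r hr).lt_or_eq with h | h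
    · exact h
    · exfalso
      have hmin : IsLocalMin Φ r := by
        filter_upwards [lt_mem_nhds hr] with x hx
        rw [← h]; exact hΦ0 x hx
      have := hmin.hasDerivAt_eq_zero (hdΦ r hr)
      linarith [hzero r hr h.symm]
  -- v increases
  set W : ℝ → ℝ := fun r => (u r - 1) * (1 + 2 * σ r * v r) + s r * v r * (1 + σ r * u r) with hW
  have hWlow : ∀ r > 0, u r - 1 + v r / (2 * N) ≤ W r := by
    intro r hr
    have h1 := hu r hr
    have h2 := hv r hr
    have h3 := hσ r hr
    have h4 := hs r hr
    have : (1 / (2 * N) + k * σ r) * v r * (1 + σ r * u r) ≤ s r * v r * (1 + σ r * u r) := by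
      gcongr
    have a : 0 ≤ σ r * v r * (k - 2) := mul_nonneg (by positivity) (by linarith)
    have b : 0 ≤ (1 / (2 * N) + k * σ r) * v r * (σ r * u r) := by positivity
    have c : 0 ≤ σ r * v r * u r := by positivity
    have e : (u r - 1) * (1 + 2 * σ r * v r) + (1 / (2 * N) + k * σ r) * v r * (1 + σ r * u r)
      = (u r - 1 + v r / (2 * N)) + 2 * (σ r * v r * u r) + σ r * v r * (k - 2) +
        (1 / (2 * N) + k * σ r) * v r * (σ r * u r) := by ring
    simp only [hW]
    linarith
  have hWpos : ∀ r > 0, 0 < W r := by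
    intro r hr
    have h := hWlow r hr
    have hp : 0 < u r + v r / 2 - N := hΦpos r hr
    rcases le_or_gt (v r) (2 * N) with h1 | h1
    · have e : u r - 1 + v r / (2 * N) = (u r + v r / 2 - N) + (N - 1) * (2 * N - v r) / (2 * N) := by
        field_simp; ring
      have : 0 ≤ (N - 1) * (2 * N - v r) / (2 * N) :=
        div_nonneg (mul_nonneg (by linarith) (by linarith)) (by linarith)
      linarith
    · have : 1 < v r / (2 * N) := by rw [lt_div_iff₀ (by positivity)]; linarith
      linarith [hu r hr]
  have hvmono : StrictMonoOn v (Ioi 0) := by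
    apply strictMonoOn_of_deriv_pos (convex_Ioi 0)
    · exact fun x hx => (hdv x hx).continuousAt.continuousWithinAt
    · intro x hx
      rw [interior_Ioi] at hx
      rw [(hdv x hx).deriv]
      exact div_pos (mul_pos (hv x hx) (hWpos x hx)) hx
  -- v exceeds 2N
  have hexc : ∃ r > 0, 2 * N < v r := by
    by_contra hno
    push Not at hno
    set v0 := v 1 with hv0
    have hv0p : 0 < v0 := hv 1 one_pos
    have hvge : ∀ r, 1 ≤ r → v0 ≤ v r := fun r hr =>
      hvmono.monotoneOn (mem_Ioi.2 one_pos) (mem_Ioi.2 (by linarith)) hr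
    set a := N / (N - 1) with ha
    have hN1 : 0 < N - 1 := by linarith
    have hap : 0 < a := by positivity
    set X : ℝ → ℝ := fun r => Φ r * v r ^ a with hX
    have hdX : ∀ r > 0, HasDerivAt X (v r ^ a * (D r + a * Φ r * W r) / r) r := by
      intro r hr
      have h2 := hv r hr
      have := (hdΦ r hr).mul ((hdv r hr).rpow_const (p := a) (Or.inl h2.ne'))
      refine this.congr_deriv ?_
      rw [Real.rpow_sub_one h2.ne']
      simp only [hW]
      field_simp
    set δ := min (X 1) (v0 / 2 * v0 ^ a) / 2 with hδ
    have hX1 : 0 < X 1 := mul_pos (hΦpos 1 one_pos) (Real.rpow_pos_of_pos hv0p _)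
    have hm : 0 < min (X 1) (v0 / 2 * v0 ^ a) :=
      lt_min hX1 (mul_pos (by linarith) (Real.rpow_pos_of_pos hv0p _))
    have hδp : 0 < δ := by positivity
    have hXlow : ∀ r, 1 ≤ r → δ ≤ X r := by
      intro r hr
      refine aux_barrier X (fun r => v r ^ a * (D r + a * Φ r * W r) / r) 1 r δ hr
        (fun x hx => hdX x (by linarith [hx.1])) ?_ ?_
      · linarith [min_le_left (X 1) (v0 / 2 * v0 ^ a)]
      · intro x hx hxe
        have hx0 : 0 < x := by linarith [hx.1]
        have h1 := hu x hx0
        have h2 := hv x hx0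
        have h3 := hσ x hx0
        have hp := hΦpos x hx0
        have hva := Real.rpow_pos_of_pos h2 a
        have hΦlt : Φ x < v0 / 2 := by
          by_contra hge
          push Not at hge
          have : v0 / 2 * v0 ^ a ≤ Φ x * v x ^ a :=
            mul_le_mul hge (Real.rpow_le_rpow hv0p.le (hvge x hx.1) hap.le)
              (Real.rpow_nonneg hv0p.le _) hp.le
          have h5 : Φ x * v x ^ a = δ := hxe
          linarith [min_le_right (X 1) (v0 / 2 * v0 ^ a)]
        have huN : u x < N := by
          have : u x + v x / 2 - N < v0 / 2 := hΦlt
          linarith [hvge x hx.1]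
        have hd := hDlow x hx0 huN
        have hWl := hWlow x hx0
        have hv2 := hno x hx0
        -- a W ≥ u
        have haW : u x ≤ a * W x := by
          have e : a * (u x - 1 + v x / (2 * N)) = u x + (u x + v x / 2 - N) / (N - 1) := by
            rw [ha]; field_simp; ring
          have : 0 ≤ (u x + v x / 2 - N) / (N - 1) := div_nonneg hp.le hN1.le
          nlinarith [mul_le_mul_of_nonneg_left hWl hap.le]
        have hB : -u x + v x / (2 * N) ≤ -u x + (1 / (2 * N) + k * σ x) * v x * (1 + σ x * u x) +
            2 * σ x * v x * (u x - 1) := by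
          have a' : 0 ≤ σ x * v x * (k - 2) := mul_nonneg (by positivity) (by linarith)
          have b : 0 ≤ (1 / (2 * N) + k * σ x) * v x * (σ x * u x) := by positivity
          have c : 0 ≤ σ x * v x * u x := by positivity
          have e : -u x + (1 / (2 * N) + k * σ x) * v x * (1 + σ x * u x) +
            2 * σ x * v x * (u x - 1) = -u x + v x / (2 * N) + 2 * (σ x * v x * u x)
              + σ x * v x * (k - 2) + (1 / (2 * N) + k * σ x) * v x * (σ x * u x) := by ring
          linarith
        have h6 := mul_le_mul_of_nonneg_left hB hp.le
        have h7 := mul_le_mul_of_nonneg_left haW hp.le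
        have h8 : 0 < Φ x * (v x / (2 * N)) := by positivity
        refine div_pos (mul_pos hva ?_) hx0
        linarith [mul_assoc a (Φ x) (W x), mul_left_comm a (Φ x) (W x), mul_add (Φ x) (-u x) (v x / (2 * N)), mul_neg (Φ x) (u x)]
    set d := δ / (2 * N) ^ a with hd
    have hdp : 0 < d := by positivity
    have hΦd : ∀ r, 1 ≤ r → d ≤ Φ r := by
      intro r hr
      have hr0 : 0 < r := by linarith
      rw [hd, div_le_iff₀ (by positivity)]
      refine (hXlow r hr).trans ?_
      exact mul_le_mul_of_nonneg_left
        (Real.rpow_le_rpow (hv r hr0).le (hno r hr0) hap.le) (hΦpos r hr0).le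
    -- v - v0 d log r monotone
    have hmono : MonotoneOn (fun r => v r - v0 * d * Real.log r) (Ici 1) := by
      apply monotoneOn_of_deriv_nonneg (convex_Ici 1)
      · intro x hx
        have hx0 : (0:ℝ) < x := lt_of_lt_of_le one_pos hx
        exact ((hdv x hx0).sub ((Real.hasDerivAt_log hx0.ne').const_mul _)).continuousAt.continuousWithinAt
      · intro x hx
        rw [interior_Ici] at hx
        have hx0 : (0:ℝ) < x := one_pos.trans hx
        exact ((hdv x hx0).sub ((Real.hasDerivAt_log hx0.ne').const_mul _)).differentiableAt.differentiableWithinAt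
      · intro x hx
        rw [interior_Ici] at hx
        have hx0 : (0:ℝ) < x := one_pos.trans hx
        have hx1 : 1 ≤ x := le_of_lt hx
        have hder := ((hdv x hx0).sub ((Real.hasDerivAt_log hx0.ne').const_mul (v0 * d))).deriv
        have hder' : deriv (fun r => v r - v0 * d * Real.log r) x = _ := hder
        rw [hder']
        have hWd : d ≤ W x := by
          have hp : d ≤ u x + v x / 2 - N := hΦd x hx1
          have h := hWlow x hx0
          have h1 := hno x hx0
          have e : u x - 1 + v x / (2 * N) = (u x + v x / 2 - N) + (N - 1) * (2 * N - v x) / (2 * N) := by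
            field_simp; ring
          have : 0 ≤ (N - 1) * (2 * N - v x) / (2 * N) :=
            div_nonneg (mul_nonneg (by linarith) (by linarith)) (by linarith)
          linarith
        have : v0 * d ≤ v x * W x := mul_le_mul (hvge x hx1) hWd hdp.le (hv x hx0).le
        have h9 : v0 * d * x⁻¹ ≤ v x * W x / x := by
          rw [div_eq_mul_inv]; gcongr
        linarith
    set r := Real.exp (2 * N / (v0 * d)) with hr
    have hr1 : 1 ≤ r := Real.one_le_exp (by positivity)
    have := hmono (mem_Ici.2 le_rfl) (mem_Ici.2 hr1) hr1
    simp only [Real.log_one, hr, Real.log_exp] at this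
    rw [← hr] at this
    have e : v0 * d * (2 * N / (v0 * d)) = 2 * N := by field_simp
    rw [e] at this
    linarith [hno r (by positivity), hv 1 one_pos]
  -- blow-up
  obtain ⟨r1, hr1, hv1⟩ := hexc
  set c := (1 / (2 * N) - 1 / v r1) with hc
  have hcp : 0 < c := by
    have := one_div_lt_one_div_of_lt (by positivity : 0 < 2 * N) hv1
    linarith
  have hvge : ∀ r, r1 ≤ r → v r1 ≤ v r := fun r hr =>
      hvmono.monotoneOn (mem_Ioi.2 hr1) (mem_Ioi.2 (by linarith)) hr
  have hmono : MonotoneOn (fun r => -(v r)⁻¹ - c * Real.log r) (Ici r1) := by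
    have hder : ∀ x ≥ r1, HasDerivAt (fun r => -(v r)⁻¹ - c * Real.log r)
        (-(-(v x * W x / x) / v x ^ 2) - c * x⁻¹) x := by
      intro x hx
      have hx0 : (0:ℝ) < x := lt_of_lt_of_le hr1 hx
      exact ((hdv x hx0).inv (hv x hx0).ne').neg.sub ((Real.hasDerivAt_log hx0.ne').const_mul c)
    apply monotoneOn_of_deriv_nonneg (convex_Ici r1)
    · exact fun x hx => (hder x hx).continuousAt.continuousWithinAt
    · intro x hx
      rw [interior_Ici] at hx
      exact (hder x (le_of_lt hx)).differentiableAt.differentiableWithinAt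
    · intro x hx
      rw [interior_Ici] at hx
      have hx1 : r1 ≤ x := le_of_lt hx
      have hx0 : (0:ℝ) < x := lt_of_lt_of_le hr1 hx1
      rw [(hder x hx1).deriv]
      have h2 := hv x hx0
      have hWc : c * v x ≤ W x := by
        have h := hWlow x hx0
        have : v x / v r1 ≥ 1 := by
          rw [ge_iff_le, le_div_iff₀ (hv r1 hr1)]; linarith [hvge x hx1]
        have e : c * v x = v x / (2 * N) - v x / v r1 := by rw [hc]; ring
        linarith [hu x hx0]
      have e : -(-(v x * W x / x) / v x ^ 2) - c * x⁻¹ = (W x - c * v x) / (v x * x) := by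
        field_simp
      rw [e]
      exact div_nonneg (by linarith) (by positivity)
  set r := r1 * Real.exp ((v r1)⁻¹ / c) with hr
  have hvr1 := hv r1 hr1
  have hrr : r1 ≤ r := by
    have : 1 ≤ Real.exp ((v r1)⁻¹ / c) := Real.one_le_exp (by positivity)
    nlinarith
  have := hmono (mem_Ici.2 le_rfl) (mem_Ici.2 hrr) hrr
  simp only at this
  have hlog : Real.log r = Real.log r1 + (v r1)⁻¹ / c := by
    rw [hr, Real.log_mul hr1.ne' (Real.exp_pos _).ne', Real.log_exp]
  rw [hlog, mul_add] at this
  have e : c * ((v r1)⁻¹ / c) = (v r1)⁻¹ := by field_simp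
  rw [e] at this
  have : 0 < (v r)⁻¹ := inv_pos.2 (hv r (by linarith))
  linarith

/-- With `k = 3+2l+1/2` for `l ≥ -3/4` and `k = 2` for `-1 < l < -3/4`:
if there is `η̌ > 0` with `σ' ≥ 1/(2(3+2l)) + k σ` on `(0,η̌]`, then every regular
solution of the static Einstein–Vlasov equations whose central potential value
`η_c` satisfies `η_c < η̌` has finite radius and finite mass: its maximal interval
of definition is `(0,R)` with `R < ∞` and `sup m < ∞`. -/
theorem stmt1
    (l : ℝ) (hl : -1 < l)
    (φ : ℝ → ℝ)
    (hφcont : ContinuousOn φ (Ioo 0 1))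
    (hφnonneg : ∀ x ∈ Ioo (0:ℝ) 1, 0 ≤ φ x)
    (hφne : ∃ x ∈ Ioo (0:ℝ) 1, φ x ≠ 0)
    (hφbound : ∃ C > (0:ℝ), ∃ ε > (0:ℝ), ∃ δ ∈ Ioo (0:ℝ) 1,
      ∀ x ∈ Ioo (1 - δ) 1, φ x ≤ C * (1 - x) ^ (-1 + ε))
    (hφholder : l < -(1/2) → ∃ α > -l - 1/2, ∃ Cα > (0:ℝ),
      ∀ x ∈ Ioo (0:ℝ) 1, ∀ y ∈ Ioo (0:ℝ) 1, |φ x - φ y| ≤ Cα * |x - y| ^ α)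
    (k₁ k₂ : ℝ) (hk₁ : 0 < k₁) (hk₁₂ : k₁ < k₂)
    (hσ'near : ∃ η₀ > (0:ℝ), ∀ η ∈ Ioo (0:ℝ) η₀, deriv (sigmaFun φ l) η ∈ Ioo k₁ k₂)
    (k : ℝ) (hk : k = if -(3/4) ≤ l then 3 + 2 * l + 1 / 2 else 2)
    (ηch : ℝ) (hηch : 0 < ηch)
    (hmain : ∀ η : ℝ, 0 < η → η ≤ ηch →
      1 / (2 * (3 + 2 * l)) + k * sigmaFun φ l η ≤ deriv (sigmaFun φ l) η)
    (R : EReal) (hR : (0 : EReal) < R)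
    (m ηf : ℝ → ℝ)
    (hsol : IsEVSolution φ l m ηf 0 R)
    (hmax : ∀ R' : EReal, R < R' → ∀ m' ηf' : ℝ → ℝ,
      (∀ r : ℝ, 0 < r → (r : EReal) < R → m' r = m r ∧ ηf' r = ηf r) →
      ¬ IsEVSolution φ l m' ηf' 0 R')
    -- regularity at the center
    (ηc : ℝ) (hηcpos : 0 < ηc)
    (hηclim : Tendsto ηf (nhdsWithin 0 (Ioi 0)) (nhds ηc))
    (hmlim : Tendsto (fun r => m r / r) (nhdsWithin 0 (Ioi 0)) (nhds 0))
    (hulim : Tendsto (fun r => 4 * Real.pi * r ^ 3 * rhoFun φ l r (ηf r) / m r)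
      (nhdsWithin 0 (Ioi 0)) (nhds (3 + 2 * l)))
    (hηcsmall : ηc < ηch) :
    R < ⊤ ∧ ∃ Mb : ℝ, ∀ r : ℝ, 0 < r → (r : EReal) < R → m r ≤ Mb := by
  rcases lt_or_eq_of_le (le_top : R ≤ ⊤) with hRt | hRt
  · refine ⟨hRt, R.toReal, fun r hr hrR => ?_⟩
    have h1 := (hsol r hr hrR).2.1
    have h2 := (hsol r hr hrR).2.2.1
    have hcoe : ((R.toReal : ℝ) : EReal) = R :=
      EReal.coe_toReal hRt.ne (ne_bot_of_gt hR)
    rw [← hcoe, EReal.coe_lt_coe_iff] at hrR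
    linarith
  exfalso
  have hsol' : ∀ r > 0, 0 < ηf r ∧ 0 < m r ∧ 2 * m r < r ∧
    HasDerivAt m (4 * Real.pi * r ^ 2 * rhoFun φ l r (ηf r)) r ∧
    HasDerivAt ηf
      (-((1 - 2 * m r / r)⁻¹ * (m r / r + 4 * Real.pi * r ^ 2 * pRad φ l r (ηf r))) / r) r := by
    intro r hr
    exact hsol r hr (by rw [hRt]; exact EReal.coe_lt_top r)
  have hN : 1 < 3 + 2 * l := by linarith
  have hN0 : 0 < 3 + 2 * l := by linarith
  have hk2 : 2 ≤ k := by rw [hk]; split_ifs <;> linarith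
  have hkN : 3 + 2 * l + 1 / 2 ≤ k := by rw [hk]; split_ifs <;> linarith
  have hφint := aux_phi_int φ hφcont hφnonneg hφbound
  have hσnn : ∀ η, 0 < η → 0 ≤ sigmaFun φ l η := by
    intro η h
    have a := aux_gfun_nonneg φ hφnonneg (l + 3 / 2) η h
    have b := aux_gfun_nonneg φ hφnonneg (l + 1 / 2) η h
    rw [sigmaFun]
    positivity
  have hd : ∀ η, 0 < η → η ≤ ηch → 0 < deriv (sigmaFun φ l) η := by
    intro η h h'
    have := hmain η h h'
    have h2 := hσnn η h
    have h3 : 0 < 1 / (2 * (3 + 2 * l)) := by positivity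
    have h4 : 0 ≤ k * sigmaFun φ l η := mul_nonneg (by linarith) h2
    linarith
  have hsig := aux_sigma l hl φ hφcont hφnonneg hφint ηch hd
  have ha : 0 < acoef l := by
    have h1 := Real.Gamma_pos_of_pos (show 0 < l + 1 by linarith)
    have h2 := Real.Gamma_pos_of_pos (show 0 < l + 3 / 2 by linarith)
    have h3 : 0 < l + 3 / 2 := by linarith
    have := Real.pi_pos
    rw [acoef]
    positivity
  -- monotonicity of η
  have hanti : AntitoneOn ηf (Ioi 0) := by
    apply antitoneOn_of_deriv_nonpos (convex_Ioi 0)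
    · exact fun x hx => (hsol' x hx).2.2.2.2.continuousAt.continuousWithinAt
    · intro x hx
      rw [interior_Ioi] at hx
      exact (hsol' x hx).2.2.2.2.differentiableAt.differentiableWithinAt
    · intro x hx
      rw [interior_Ioi] at hx
      obtain ⟨h1, h2, h3, -, h5⟩ := hsol' x hx
      have hx0 : 0 < x := hx
      rw [h5.deriv]
      have p1 : 0 ≤ pRad φ l x (ηf x) := by
        have := aux_gfun_nonneg φ hφnonneg (l + 3 / 2) _ h1
        rw [pRad]; positivity
      have p2 : 0 < 1 - 2 * m x / x := by
        rw [sub_pos, div_lt_one hx0]; exact h3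
      have := Real.pi_pos
      rw [neg_div]
      rw [neg_nonpos]
      positivity
  have hηle : ∀ r > 0, ηf r ≤ ηc := by
    intro r hr
    refine ge_of_tendsto hηclim ?_
    filter_upwards [Ioo_mem_nhdsGT hr] with x hx
    exact hanti (mem_Ioi.2 hx.1) (mem_Ioi.2 hr) hx.2.le
  have hηlt : ∀ r > 0, ηf r < ηch := fun r hr => (hηle r hr).trans_lt hηcsmall
  have hsr := fun r (hr : r > 0) => hsig (ηf r) (hsol' r hr).1 (hηlt r hr)
  set σ : ℝ → ℝ := fun r => sigmaFun φ l (ηf r) with hσ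
  set s : ℝ → ℝ := fun r => deriv (sigmaFun φ l) (ηf r) with hs
  set Z : ℝ → ℝ := fun r => 4 * Real.pi * pRad φ l r (ηf r) with hZ
  have hZpos : ∀ r > 0, 0 < Z r := by
    intro r hr
    have := (hsr r hr).2.2.1
    have hpi := Real.pi_pos
    simp only [hZ, pRad]
    positivity
  have hrho : ∀ r > 0, 4 * Real.pi * rhoFun φ l r (ηf r) = Z r / σ r := by
    intro r hr
    have h1 := (hsr r hr).2.2.1
    have h2 := aux_gfun_nonneg φ hφnonneg (l + 1 / 2) _ (hsol' r hr).1
    simp only [hZ, hσ, pRad, rhoFun, sigmaFun]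
    generalize gfun φ (l + 3 / 2) (ηf r) = g1 at *
    generalize gfun φ (l + 1 / 2) (ηf r) = g0 at *
    generalize Real.exp ((2 * l + 4) * ηf r) = ex'
    have hex : 0 < Real.exp (-2 * ηf r) := Real.exp_pos _
    generalize Real.exp (-2 * ηf r) = ex at *
    have c : 0 < g1 + 1 / 2 * ex * g0 := by positivity
    have hNne : 3 + 2 * l ≠ 0 := hN0.ne'
    rw [div_div_eq_mul_div, eq_div_iff (by positivity), show l + 3 / 2 = (3 + 2 * l) / 2 by ring]
    generalize 3 + 2 * l = n at hNne ⊢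
    field_simp
  have hm' : ∀ r > 0, HasDerivAt m (r ^ 2 * (Z r / σ r)) r := by
    intro r hr
    refine (hsol' r hr).2.2.2.1.congr_deriv ?_
    rw [← hrho r hr]; ring
  set e : ℝ → ℝ := fun r => -(m r + r ^ 3 * Z r) / (r * (r - 2 * m r)) with he
  have hη' : ∀ r > 0, HasDerivAt ηf (e r) r := by
    intro r hr
    obtain ⟨h1, h2, h3, -, h5⟩ := hsol' r hr
    refine h5.congr_deriv ?_
    have p2 : r - 2 * m r ≠ 0 := by linarith
    have e1 : (1 - 2 * m r / r)⁻¹ = r / (r - 2 * m r) := by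
      rw [one_sub_div hr.ne', inv_div]
    rw [e1]
    simp only [he, hZ]
    generalize pRad φ l r (ηf r) = P
    field_simp
  have hσ' : ∀ r > 0, HasDerivAt σ (s r * e r) r := by
    intro r hr
    exact (hsr r hr).2.2.2.1.hasDerivAt.comp r (hη' r hr)
  have hZ' : ∀ r > 0, HasDerivAt Z (Z r * (2 * l / r + (1 + 1 / σ r) * e r)) r := by
    intro r hr
    have hg := (hsr r hr).2.2.2.2.comp r (hη' r hr)
    have hex := ((hη' r hr).const_mul (2 * l + 4)).exp
    have hr' := (Real.hasDerivAt_rpow_const (x := r) (p := 2 * l) (Or.inl (ne_of_gt hr)))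
    have h := (((hr'.const_mul (acoef l)).mul hex).mul hg).const_mul (4 * Real.pi)
    refine h.congr_deriv ?_
    have h1 := (hsr r hr).2.2.1
    have h2 := aux_gfun_nonneg φ hφnonneg (l + 1 / 2) _ (hsol' r hr).1
    have key : (l + 3 / 2) * Real.exp (-2 * ηf r) * gfun φ (l + 1 / 2) (ηf r) =
        gfun φ (l + 3 / 2) (ηf r) * (1 / σ r - (3 + 2 * l)) := by
      simp only [hσ, sigmaFun]
      generalize gfun φ (l + 3 / 2) (ηf r) = g1 at *
      generalize gfun φ (l + 1 / 2) (ηf r) = g0 at *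
      have hex : 0 < Real.exp (-2 * ηf r) := Real.exp_pos _
      generalize Real.exp (-2 * ηf r) = ex at *
      have c : 0 < g1 + 1 / 2 * ex * g0 := by positivity
      have e2 : 1 / (1 / (3 + 2 * l) * g1 / (g1 + 1 / 2 * ex * g0)) =
          (3 + 2 * l) * (g1 + 1 / 2 * ex * g0) / g1 := by
        rw [div_div_eq_mul_div, div_eq_div_iff (by positivity) (by positivity)]
        field_simp
      rw [e2]
      field_simp
      ring
    simp only [Function.comp, Pi.mul_apply]
    rw [key, Real.rpow_sub_one hr.ne']
    simp only [hZ, pRad]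
    generalize gfun φ (l + 3 / 2) (ηf r) = g1 at *
    generalize Real.exp ((2 * l + 4) * ηf r) = ex at *
    have hσp : σ r ≠ 0 := (hsr r hr).1.ne'
    ring
  set u : ℝ → ℝ := fun r => r ^ 3 * Z r / (σ r * m r) with hu
  set v : ℝ → ℝ := fun r => m r / ((r - 2 * m r) * σ r) with hv
  have hueq : ∀ r > 0, u r = 4 * Real.pi * r ^ 3 * rhoFun φ l r (ηf r) / m r := by
    intro r hr
    have : 4 * Real.pi * r ^ 3 * rhoFun φ l r (ηf r) = r ^ 3 * (Z r / σ r) := by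
      rw [← hrho r hr]; ring
    rw [this, ← mul_div_assoc, div_div]
  refine aux_ode (3 + 2 * l) k hN hk2 hkN u v σ s ?_ ?_ (fun r hr => (hsr r hr).1) ?_ ?_ ?_ ?_ ?_ ?_
  · intro r hr
    have := hZpos r hr
    have := (hsr r hr).1
    have := (hsol' r hr).2.1
    simp only [hu]
    exact div_pos (by positivity) (mul_pos (hsr r hr).1 this)
  · intro r hr
    exact div_pos (hsol' r hr).2.1 (mul_pos (by linarith [(hsol' r hr).2.2.1]) (hsr r hr).1)
  · intro r hr
    refine (hsr r hr).2.1.trans ?_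
    rw [div_le_one hN0]; exact hN.le
  · intro r hr
    exact hmain (ηf r) (hsol' r hr).1 (hηlt r hr).le
  · intro r hr
    have hσp : σ r ≠ 0 := (hsr r hr).1.ne'
    have hmp : m r ≠ 0 := (hsol' r hr).2.1.ne'
    have hrm : r - 2 * m r ≠ 0 := by linarith [(hsol' r hr).2.2.1]
    have hr0 : r ≠ 0 := hr.ne'
    have h := (((hasDerivAt_pow 3 r).mul (hZ' r hr)).div ((hσ' r hr).mul (hm' r hr))
      (mul_ne_zero hσp hmp))
    refine h.congr_deriv ?_
    simp only [hu, hv, he, Pi.mul_apply]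
    generalize σ r = σr at *
    generalize s r = sr at *
    generalize Z r = Zr at *
    generalize m r = mr at *
    push_cast
    field_simp
    ring
  · intro r hr
    have hσp : σ r ≠ 0 := (hsr r hr).1.ne'
    have hmp : m r ≠ 0 := (hsol' r hr).2.1.ne'
    have hrm : r - 2 * m r ≠ 0 := by linarith [(hsol' r hr).2.2.1]
    have hr0 : r ≠ 0 := hr.ne'
    have h := (hm' r hr).div (((hasDerivAt_id r).sub ((hm' r hr).const_mul 2)).mul (hσ' r hr))
      (mul_ne_zero hrm hσp)
    refine h.congr_deriv ?_
    simp only [hu, hv, he, Pi.mul_apply, Pi.sub_apply, id]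
    generalize σ r = σr at *
    generalize s r = sr at *
    generalize Z r = Zr at *
    generalize m r = mr at *
    field_simp
    ring
  · refine hulim.congr' ?_
    filter_upwards [self_mem_nhdsWithin] with r hr
    exact (hueq r hr).symm
  · have hc := hsig ηc hηcpos hηcsmall
    have hσl : Tendsto σ (nhdsWithin 0 (Ioi 0)) (nhds (sigmaFun φ l ηc)) :=
      hc.2.2.2.1.continuousAt.tendsto.comp hηclim
    have h1 : Tendsto (fun r => (m r / r) / ((1 - 2 * (m r / r)) * σ r))
        (nhdsWithin 0 (Ioi 0)) (nhds (0 / ((1 - 2 * 0) * sigmaFun φ l ηc))) := by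
      refine hmlim.div (((hmlim.const_mul 2).const_sub 1).mul hσl) ?_
      simpa using hc.1.ne'
    rw [zero_div] at h1
    refine h1.congr' ?_
    filter_upwards [self_mem_nhdsWithin] with r hr
    have hr0 : r ≠ 0 := (ne_of_gt hr)
    have hσp : σ r ≠ 0 := (hsr r hr).1.ne'
    have hrm : r - 2 * m r ≠ 0 := by linarith [(hsol' r hr).2.2.1]
    have e1 : 1 - 2 * (m r / r) = (r - 2 * m r) / r := by field_simp
    simp only [hv]
    rw [e1]
    generalize σ r = σr at *
    field_simp
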